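/- arXiv:0909.3388 — 12 statements merged into one kernel-verified Lean document; each statement's English description precedes it below -/
import Mathlib

section
/- For any integer n ≥ 2 and any x ∈ X_n = {1, 2, ..., 2^n − 1}, one has L_n(x) = 2^{n−1} if and only if √(2^{2n−3} − 2^{n−2}) < |2^{n−1} − x| ≤ √(2^{2n−3}). -/
/-!
Put `q = 2 ^ (n - 2)`. Then `L_n(x) = 2q` says `2q² ≤ x(4q - x) < 2q² + q`, and since
`(2q - x)² = 4q² - x(4q - x)` this is `2q² - q < (2q - x)² ≤ 2q²`; take square roots.
-/

/-- The integer-valued logistic map `L_n(x) = ⌊x(2^n − x)/2^{n−2}⌋` (for `x ≤ 2^n`,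
natural-number division is exactly the floor of the real quotient). -/
def Ln (n x : ℕ) : ℕ := x * (2 ^ n - x) / 2 ^ (n - 2)

/-- A parameter `n ≥ 2` is *undesirable* if some `x ∈ X_n = {1, …, 2^n − 1}`
satisfies `L_n(x) = 2^{n−1}`. -/
def Undesirable (n : ℕ) : Prop :=
  ∃ x ∈ Finset.Icc 1 (2 ^ n - 1), Ln n x = 2 ^ (n - 1)

instance : DecidablePred Undesirable := fun n => by
  unfold Undesirable; infer_instance

theorem stmt_0 (n : ℕ) (hn : 2 ≤ n) (x : ℕ) (hx : x ∈ Finset.Icc 1 (2 ^ n - 1)) :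
    Ln n x = 2 ^ (n - 1) ↔
      (Real.sqrt ((2 : ℝ) ^ (2 * n - 3) - (2 : ℝ) ^ (n - 2)) < |(2 : ℝ) ^ (n - 1) - (x : ℝ)| ∧
        |(2 : ℝ) ^ (n - 1) - (x : ℝ)| ≤ Real.sqrt ((2 : ℝ) ^ (2 * n - 3))) := by
  obtain ⟨m, rfl⟩ := Nat.exists_eq_add_of_le' hn
  have e1 : m + 2 - 1 = m + 1 := rfl
  have e2 : m + 2 - 2 = m := rfl
  have e3 : 2 * (m + 2) - 3 = 2 * m + 1 := by omega
  rw [Finset.mem_Icc] at hx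
  have hxle : x ≤ 2 ^ (m + 2) := by omega
  unfold Ln
  rw [e1, e2, e3]
  have hq : 1 ≤ 2 ^ m := Nat.one_le_two_pow
  have p2 : 2 ^ (m + 2) = 4 * 2 ^ m := by ring
  have p1 : 2 ^ (m + 1) = 2 * 2 ^ m := by ring
  have r1 : (2 : ℝ) ^ (m + 1) = 2 * 2 ^ m := by ring
  have r3 : (2 : ℝ) ^ (2 * m + 1) = 2 * (2 ^ m) ^ 2 := by ring
  rw [p2] at hxle ⊢
  rw [p1, r1, r3]
  have hqR : (1 : ℝ) ≤ 2 ^ m := by exact_mod_cast hq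
  have hcast : ((2 ^ m : ℕ) : ℝ) = 2 ^ m := by push_cast; rfl
  rw [← hcast] at hqR ⊢
  generalize 2 ^ m = q at *
  -- Squaring turns the bounds on `|2q - x|` into bounds on `(2q - x)² = 4q² - x(4q - x)`.
  rw [← Real.sqrt_sq_eq_abs, Real.sqrt_lt_sqrt_iff (by nlinarith),
    Real.sqrt_le_sqrt_iff (by positivity), Nat.div_eq_iff (by omega)]
  -- With `y = 4q - x` the truncated subtraction disappears.
  obtain ⟨y, hy⟩ := Nat.exists_eq_add_of_le hxle
  have hyR : 4 * (q : ℝ) = x + y := by exact_mod_cast hy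
  have hsq : (2 * (q : ℝ) - x) ^ 2 = 4 * (q : ℝ) ^ 2 - x * y := by
    linear_combination (-(x : ℝ)) * hyR
  rw [show 4 * q - x = y by omega, hsq]
  have lo : 2 * q * q ≤ x * y ↔ 4 * (q : ℝ) ^ 2 - x * y ≤ 2 * (q : ℝ) ^ 2 := by
    rw [← Nat.cast_le (α := ℝ)]
    push_cast
    constructor <;> intro h <;> linarith
  have hi : x * y < 2 * q * q + q ↔
      2 * (q : ℝ) ^ 2 - q < 4 * (q : ℝ) ^ 2 - x * y := by
    rw [← Nat.cast_lt (α := ℝ)]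
    push_cast
    constructor <;> intro h <;> linarith
  rw [← lo, ← hi, and_comm]
  have : x * y ≤ 2 * q * q + q - 1 ↔ x * y < 2 * q * q + q := by omega
  rw [this]
end

section
/- A parameter n ≥ 2 is undesirable if there exists an integer m with 2^{n−2}·√2 − √2/4 ≤ m ≤ 2^{n−2}·√2. -/
theorem stmt_1 (n : ℕ) (hn : 2 ≤ n)
    (h : ∃ m : ℤ, (2 : ℝ) ^ (n - 2) * Real.sqrt 2 - Real.sqrt 2 / 4 ≤ (m : ℝ) ∧
      (m : ℝ) ≤ (2 : ℝ) ^ (n - 2) * Real.sqrt 2) :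
    Undesirable n := by
  obtain ⟨m, h1, h2⟩ := h
  obtain ⟨k, rfl⟩ := Nat.exists_eq_add_of_le' hn
  have e2 : k + 2 - 2 = k := by omega
  have e1 : k + 2 - 1 = k + 1 := by omega
  rw [e2] at h1 h2
  unfold Undesirable Ln
  rw [e2, e1, pow_succ 2 (k + 1), pow_succ 2 k]
  have hK : 1 ≤ 2 ^ k := Nat.one_le_two_pow
  have hcast : ((2 : ℝ) ^ k) = ((2 ^ k : ℕ) : ℝ) := by push_cast; rfl
  rw [hcast] at h1 h2
  generalize 2 ^ k = K at *
  have hKR : (1 : ℝ) ≤ K := by exact_mod_cast hK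
  have hs : Real.sqrt 2 * Real.sqrt 2 = 2 := Real.mul_self_sqrt (by norm_num)
  have hs0 : 0 < Real.sqrt 2 := by positivity
  have hlow : 0 < Real.sqrt 2 * (K - 1 / 4) := mul_pos hs0 (by linarith)
  have hmR : (0 : ℝ) < m := by linarith
  have hm : 0 < m := by exact_mod_cast hmR
  lift m to ℕ using hm.le
  simp only [Int.cast_natCast] at h1 h2 hmR
  have hupR : (m : ℝ) * m ≤ 2 * K * K := by
    have := mul_self_le_mul_self hmR.le h2
    linear_combination this + (K : ℝ) ^ 2 * hs
  have hloR : (2 : ℝ) * K * K < m * m + K := by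
    have := mul_self_le_mul_self hlow.le (by linarith : Real.sqrt 2 * (K - 1 / 4) ≤ (m : ℝ))
    have h8 : Real.sqrt 2 * (K - 1 / 4) * (Real.sqrt 2 * (K - 1 / 4))
        = 2 * (K - 1 / 4 : ℝ) ^ 2 := by
      linear_combination (K - 1 / 4 : ℝ) ^ 2 * hs
    nlinarith
  have hup : m * m ≤ 2 * K * K := by exact_mod_cast hupR
  have hlo : 2 * K * K < m * m + K := by exact_mod_cast hloR
  have hm2 : m < 2 * K := by nlinarith
  -- The point `2 * K - m` is written as `x + 1`, avoiding truncated subtraction.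
  obtain ⟨x, hx⟩ := Nat.exists_eq_add_of_lt hm2
  refine ⟨x + 1, Finset.mem_Icc.2 ⟨by omega, by omega⟩, ?_⟩
  have hsub : K * 2 * 2 - (x + 1) = 2 * K + m := by omega
  have hprod : (x + 1) * (2 * K + m) + m * m = 4 * K * K := by
    have hx' : 2 * K = m + (x + 1) := by omega
    have hxm : 2 * K * (2 * K + m) = (m + (x + 1)) * (2 * K + m) := by rw [← hx']
    linarith
  rw [hsub]
  exact Nat.div_eq_of_lt_le (by nlinarith) (by nlinarith)
end

section
/- A parameter n ≥ 2 is undesirable if the fractional part of 2^{n−2}·√2 is at most √2/4. -/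
theorem stmt_2 (n : ℕ) (hn : 2 ≤ n)
    (h : Int.fract ((2 : ℝ) ^ (n - 2) * Real.sqrt 2) ≤ Real.sqrt 2 / 4) :
    Undesirable n := by
  obtain ⟨k, rfl⟩ := Nat.exists_eq_add_of_le' hn
  rw [Nat.add_sub_cancel] at h
  obtain ⟨m, hm⟩ : ∃ m : ℕ, m = 2 ^ k := ⟨_, rfl⟩
  have hm0 : 0 < m := hm ▸ by positivity
  have hmR : (2 : ℝ) ^ k = m := by rw [hm]; push_cast; rfl
  rw [hmR] at h
  have hmR0 : (0 : ℝ) < m := by exact_mod_cast hm0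
  have hs : Real.sqrt 2 * Real.sqrt 2 = 2 := Real.mul_self_sqrt (by norm_num)
  have hs0 : 0 < Real.sqrt 2 := by positivity
  obtain ⟨y, hy⟩ : ∃ y : ℕ, (y : ℤ) = ⌊(m : ℝ) * Real.sqrt 2⌋ :=
    Int.eq_ofNat_of_zero_le (Int.floor_nonneg.2 (by positivity)) |>.imp fun _ h => h.symm
  have hyf : (y : ℝ) = m * Real.sqrt 2 - Int.fract ((m : ℝ) * Real.sqrt 2) := by
    rw [Int.self_sub_fract, ← hy]; rfl
  have hf0 := Int.fract_nonneg ((m : ℝ) * Real.sqrt 2)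
  generalize Int.fract ((m : ℝ) * Real.sqrt 2) = f at h hyf hf0
  have hy0 : (0 : ℝ) ≤ y := Nat.cast_nonneg y
  have hsq : (m * Real.sqrt 2) ^ 2 = 2 * (m : ℝ) ^ 2 := by
    rw [mul_pow, pow_two (Real.sqrt 2), hs]; ring
  have hupR : (y : ℝ) ^ 2 ≤ 2 * (m : ℝ) ^ 2 := by
    rw [← hsq]; exact pow_le_pow_left₀ hy0 (by linarith) 2
  have hexp : (y : ℝ) ^ 2 = 2 * (m : ℝ) ^ 2 - 2 * (m * (Real.sqrt 2 * f)) + f ^ 2 := by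
    rw [hyf, ← hsq]; ring
  have hloR : 2 * (m : ℝ) ^ 2 < (y : ℝ) ^ 2 + m := by
    -- The bound `f ≤ √2/4` is not strict: strictness comes from `f² > 0`, or from `m > 0` if `f = 0`.
    rcases hf0.eq_or_lt with h0 | h0
    · rw [hexp, ← h0]; linarith
    · have h1 : Real.sqrt 2 * f ≤ 1 / 2 := by nlinarith
      have h2 : m * (Real.sqrt 2 * f) ≤ m * (1 / 2) := mul_le_mul_of_nonneg_left h1 hmR0.le
      have h3 : 0 < f ^ 2 := by positivity
      linarith
  have hup : y ^ 2 ≤ 2 * m ^ 2 := by exact_mod_cast hupR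
  have hlo : 2 * m ^ 2 < y ^ 2 + m := by exact_mod_cast hloR
  have hlt : y < 2 * m := by nlinarith
  have e1 : 2 ^ (k + 2) = 4 * m := by rw [hm]; ring
  have e2 : 2 ^ (k + 2 - 1) = 2 * m := by
    rw [show k + 2 - 1 = k + 1 from rfl, hm]; ring
  refine ⟨2 * m - y, Finset.mem_Icc.2 ⟨by omega, by omega⟩, ?_⟩
  rw [Ln, e2, Nat.add_sub_cancel, ← hm, e1]
  have e3 : 4 * m - (2 * m - y) = 2 * m + y := by omega
  have e4 : (2 * m - y) * (2 * m + y) + y ^ 2 = 4 * m ^ 2 := by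
    zify [hlt.le]; ring
  rw [e3]
  exact Nat.div_eq_of_lt_le (by nlinarith) (by nlinarith)
end

section
/- A parameter n ≥ 2 is undesirable if b_{n−1} b_n = 00, or b_{n−1} b_n b_{n+1} b_{n+2} = 0100, or b_{n−1} b_n b_{n+1} b_{n+2} b_{n+3} = 01010, where b_1 b_2 b_3 ⋯ are the binary digits of the fractional part of √2. -/
/-- The `i`-th binary digit `b_i = ⌊2^i √2⌋ mod 2` of the fractional part of `√2`. -/
noncomputable def sqrt2digit (i : ℕ) : ℤ := ⌊(2 : ℝ) ^ i * Real.sqrt 2⌋ % 2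

/-- One step of the binary expansion: the floor of `2t` is determined by the floor of `t` and the
parity of `⌊2t⌋`. -/
lemma floor_two_mul_eq (t : ℝ) : ⌊2 * t⌋ = 2 * ⌊t⌋ + ⌊2 * t⌋ % 2 := by
  have h1 : 2 * ⌊t⌋ ≤ ⌊2 * t⌋ := by
    rw [Int.le_floor]
    push_cast
    linarith [Int.floor_le t]
  have h2 : ⌊2 * t⌋ < 2 * ⌊t⌋ + 2 := by
    rw [Int.floor_lt]
    push_cast
    linarith [Int.lt_floor_add_one t]
  omega

lemma floor_pow_succ (i : ℕ) :
    ⌊(2 : ℝ) ^ (i + 1) * √2⌋ = 2 * ⌊(2 : ℝ) ^ i * √2⌋ + sqrt2digit (i + 1) := by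
  have h := floor_two_mul_eq ((2 : ℝ) ^ i * √2)
  rw [← mul_assoc, ← pow_succ'] at h
  exact h

/-- If the fractional part of `2 ^ m √2` is below `11/32`, then `m + 2` is undesirable. -/
lemma undesirable_of_lt (m : ℕ)
    (h : (2 : ℝ) ^ m * √2 < ⌊(2 : ℝ) ^ m * √2⌋ + 11 / 32) : Undesirable (m + 2) := by
  obtain ⟨N, hN⟩ : ∃ N : ℕ, N = 2 ^ m := ⟨_, rfl⟩
  have hN1 : 1 ≤ N := hN ▸ Nat.one_le_two_pow
  have hNR : (2 : ℝ) ^ m = N := by rw [hN]; push_cast; rfl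
  rw [hNR] at h
  have hN1R : (1 : ℝ) ≤ N := by exact_mod_cast hN1
  have hr : √2 * √2 = 2 := Real.mul_self_sqrt (by norm_num)
  have hr1 : 1 ≤ √2 := Real.one_le_sqrt.mpr (by norm_num)
  have hr2 : √2 < 16 / 11 := by nlinarith
  set s : ℝ := N * √2 with hs
  have hs1 : 1 ≤ s := by nlinarith
  have hss : s * s = 2 * N * N := by rw [hs]; linear_combination (N : ℝ) * N * hr
  have hs2 : s * 11 < 16 * N := by rw [hs]; nlinarith
  obtain ⟨y, hy⟩ := Int.eq_ofNat_of_zero_le (Int.floor_nonneg.mpr (zero_le_one.trans hs1))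
  have hys : (y : ℝ) ≤ s := by
    have := Int.floor_le s
    rw [hy] at this
    exact_mod_cast this
  have hsy : s < y + 11 / 32 := by
    rw [hy] at h
    exact_mod_cast h
  have hy2 : y < 2 * N := by
    have : (y : ℝ) < 2 * N := by linarith
    exact_mod_cast this
  have hupper : y * y ≤ 2 * N * N := by
    have : (y : ℝ) * y ≤ 2 * N * N := by nlinarith
    exact_mod_cast this
  -- `y² > (s - 11/32)² > s² - (11/16) s > 2N² - N`
  have hlower : 2 * N * N < y * y + N := by
    have : (2 : ℝ) * N * N < y * y + N := by nlinarith
    exact_mod_cast this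
  obtain ⟨x, hx⟩ := Nat.exists_eq_add_of_lt hy2
  have e2 : 2 ^ (m + 2) = 4 * N := by rw [hN]; ring
  have e1 : 2 ^ (m + 1) = 2 * N := by rw [hN]; ring
  refine ⟨x + 1, Finset.mem_Icc.mpr ⟨by omega, by omega⟩, ?_⟩
  have hsub : 2 ^ (m + 2) - (x + 1) = 2 * N + y := by omega
  unfold Ln
  rw [hsub, Nat.add_sub_cancel, show m + 2 - 1 = m + 1 from rfl, e1, ← hN]
  have hprod : (x + 1) * (2 * N + y) + y * y = 4 * N * N := by
    have hx' : x + 1 = 2 * N - y := by omega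
    zify [hy2.le] at hx' ⊢
    rw [hx']
    ring
  apply Nat.div_eq_of_lt_le
  · nlinarith
  · nlinarith

theorem stmt_3 (n : ℕ) (hn : 2 ≤ n)
    (h : (sqrt2digit (n - 1) = 0 ∧ sqrt2digit n = 0) ∨
      (sqrt2digit (n - 1) = 0 ∧ sqrt2digit n = 1 ∧ sqrt2digit (n + 1) = 0 ∧
        sqrt2digit (n + 2) = 0) ∨
      (sqrt2digit (n - 1) = 0 ∧ sqrt2digit n = 1 ∧ sqrt2digit (n + 1) = 0 ∧
        sqrt2digit (n + 2) = 1 ∧ sqrt2digit (n + 3) = 0)) :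
    Undesirable n := by
  obtain ⟨m, rfl⟩ := Nat.exists_eq_add_of_le' hn
  rw [show m + 2 - 1 = m + 1 from rfl] at h
  apply undesirable_of_lt
  have f1 := floor_pow_succ m
  have f2 := floor_pow_succ (m + 1)
  have f3 := floor_pow_succ (m + 2)
  have f4 := floor_pow_succ (m + 3)
  have f5 := floor_pow_succ (m + 4)
  -- The known digits express `⌊2 ^ (m + k) √2⌋` through `⌊2 ^ m √2⌋`, for `k = 2, 4, 5`; the
  -- fractional part of `2 ^ m √2` is then below `1/4`, `5/16`, `11/32` respectively.
  rcases h with ⟨h1, h2⟩ | ⟨h1, h2, h3, h4⟩ | ⟨h1, h2, h3, h4, h5⟩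
  · have e : ⌊(2 : ℝ) ^ (m + 2) * √2⌋ = 4 * ⌊(2 : ℝ) ^ m * √2⌋ := by
      simp only [add_assoc, Nat.reduceAdd] at *
      omega
    have hlt := Int.lt_floor_add_one ((2 : ℝ) ^ (m + 2) * √2)
    rw [e, pow_add] at hlt
    push_cast at hlt
    linarith
  · have e : ⌊(2 : ℝ) ^ (m + 4) * √2⌋ = 16 * ⌊(2 : ℝ) ^ m * √2⌋ + 4 := by
      simp only [add_assoc, Nat.reduceAdd] at *
      omega
    have hlt := Int.lt_floor_add_one ((2 : ℝ) ^ (m + 4) * √2)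
    rw [e, pow_add] at hlt
    push_cast at hlt
    linarith
  · have e : ⌊(2 : ℝ) ^ (m + 5) * √2⌋ = 32 * ⌊(2 : ℝ) ^ m * √2⌋ + 10 := by
      simp only [add_assoc, Nat.reduceAdd] at *
      omega
    have hlt := Int.lt_floor_add_one ((2 : ℝ) ^ (m + 5) * √2)
    rw [e, pow_add] at hlt
    push_cast at hlt
    linarith
end

section
/- For any infinite binary word w, R_inf(w) ≤ r_inf(w) and R_sup(w) ≤ r_sup(w). -/
/-! Each of the three patterns defining `P(w)` begins with the letter `0`, at the position `i - 1`.
So `i ↦ i - 1` maps `P(w)` injectively into the positions of zeroes and `|P(w)| ≤ |Z(w)|` for every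
finite word `w`. Dividing by `n` gives a pointwise inequality between sequences with values in
`[0, 1]`, which passes to the lower and upper limits. -/


open Filter

/-- `patternAt w i` means the 1-based index `i ≥ 2` in the finite binary word `w`
(`false` = 0, `true` = 1) is a member of the set `P(w)`: one of the patterns
`00`, `0100`, `01010` occurs starting at position `i-1` (1-based) and fits in `w`. -/
def patternAt (w : List Bool) (i : ℕ) : Prop :=
  2 ≤ i ∧
    ([false, false] <+: w.drop (i - 2) ∨
     [false, true, false, false] <+: w.drop (i - 2) ∨
     [false, true, false, true, false] <+: w.drop (i - 2))

instance (w : List Bool) : DecidablePred (patternAt w) := fun i => by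
  unfold patternAt; infer_instance

/-- The set `P(w)` of indices, as a `Finset`. -/
def Pset (w : List Bool) : Finset ℕ :=
  (Finset.range (w.length + 1)).filter (patternAt w)

/-- `|P(w)|`. -/
def Pcount (w : List Bool) : ℕ := (Pset w).card

/-- `|Z(w)|`: the number of zeroes in `w`. -/
def Zcount (w : List Bool) : ℕ := w.count false

/-- The initial subword `w^(n)` of an infinite binary word `w = w_1 w_2 w_3 ⋯`
(indexed so that `w k` is the letter `w_{k+1}`). -/
def prefixWord (w : ℕ → Bool) (n : ℕ) : List Bool := List.ofFn (fun k : Fin n => w k)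

noncomputable def rinf (w : ℕ → Bool) : ℝ :=
  liminf (fun n : ℕ => (Zcount (prefixWord w n) : ℝ) / n) atTop

noncomputable def rsup (w : ℕ → Bool) : ℝ :=
  limsup (fun n : ℕ => (Zcount (prefixWord w n) : ℝ) / n) atTop

noncomputable def Rinf (w : ℕ → Bool) : ℝ :=
  liminf (fun n : ℕ => (Pcount (prefixWord w n) : ℝ) / n) atTop

noncomputable def Rsup (w : ℕ → Bool) : ℝ :=
  limsup (fun n : ℕ => (Pcount (prefixWord w n) : ℝ) / n) atTop

/-- The positions are 0-based, unlike the elements of `Pset`. -/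
lemma card_zeros_eq_Zcount (l : List Bool) :
    ((Finset.range l.length).filter (fun i => l[i]? = some false)).card = Zcount l := by
  unfold Zcount
  induction l using List.reverseRecOn with
  | nil => simp
  | append_singleton l a ih =>
    have h : (Finset.range l.length).filter (fun i => (l ++ [a])[i]? = some false)
        = (Finset.range l.length).filter (fun i => l[i]? = some false) := by
      apply Finset.filter_congr
      intro i hi
      rw [List.getElem?_append_left (Finset.mem_range.1 hi)]
    rw [List.length_append, List.length_singleton, Finset.range_add_one, Finset.filter_insert, h,
      List.count_append, ← ih]
    cases a <;> simp

lemma patternAt.getElem?_eq {w : List Bool} {i : ℕ} (h : patternAt w i) :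
    w[i - 2]? = some false := by
  have key : ∀ t : List Bool, (false :: t) <+: w.drop (i - 2) → w[i - 2]? = some false := by
    rintro t ⟨s, hs⟩
    have h0 : (w.drop (i - 2))[0]? = some false := by rw [← hs]; rfl
    simpa using h0
  rcases h.2 with h | h | h <;> exact key _ h

lemma Pcount_le_Zcount (w : List Bool) : Pcount w ≤ Zcount w := by
  rw [← card_zeros_eq_Zcount]
  -- The 1-based position `i - 1` of the leading zero is the 0-based position `i - 2`.
  refine Finset.card_le_card_of_injOn (fun i => i - 2) ?_ ?_
  · intro i hi
    have hp : patternAt w i := (Finset.mem_filter.1 hi).2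
    have hz := hp.getElem?_eq
    simp only [Finset.coe_filter, Set.mem_ofPred_eq, Finset.mem_range]
    exact ⟨(List.getElem?_eq_some_iff.1 hz).1, hz⟩
  · intro i hi j hj hij
    have h1 : 2 ≤ i := (Finset.mem_filter.1 hi).2.1
    have h2 : 2 ≤ j := (Finset.mem_filter.1 hj).2.1
    simp only at hij
    omega

theorem stmt_5 (w : ℕ → Bool) : Rinf w ≤ rinf w ∧ Rsup w ≤ rsup w := by
  have hle : ∀ n : ℕ, (Pcount (prefixWord w n) : ℝ) / n ≤ (Zcount (prefixWord w n) : ℝ) / n :=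
    fun n => by
      gcongr
      exact Pcount_le_Zcount _
  have hZ : ∀ n : ℕ, (Zcount (prefixWord w n) : ℝ) / n ≤ 1 := fun n => by
    have h : Zcount (prefixWord w n) ≤ n := by
      simpa [prefixWord, Zcount] using
        List.count_le_length (a := false) (l := prefixWord w n)
    exact div_le_one_of_le₀ (by exact_mod_cast h) (Nat.cast_nonneg n)
  have hP : ∀ n : ℕ, 0 ≤ (Pcount (prefixWord w n) : ℝ) / n := fun n => by positivity
  constructor
  · exact liminf_le_liminf (Eventually.of_forall hle)
      (isBoundedUnder_of ⟨0, hP⟩)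
      (IsBoundedUnder.isCoboundedUnder_ge (isBoundedUnder_of ⟨1, hZ⟩))
  · exact limsup_le_limsup (Eventually.of_forall hle)
      (IsBoundedUnder.isCoboundedUnder_le (isBoundedUnder_of ⟨0, hP⟩))
      (isBoundedUnder_of ⟨1, hZ⟩)
end

section
/- For any infinite binary word w, (5·r_inf(w) − 2)/3 ≤ R_inf(w). -/
/-!
The liminf inequality follows from `5 |Z(w^(n))| ≤ 3 |P(w^(n))| + 2 n + O(1)`.

Each index of `P(w)` corresponds to a zero of `w` followed by `0`, `100` or `1010`; call such a
zero *good*. A zero that is not good, a *bad* zero, is followed by `11` or `1011`. Up to boundary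
terms the displayed inequality says `3 · #bad ≤ 2 · #ones`. This holds because every bad zero leads
into a run of at least two ones. Such a run is reached by at most two bad zeroes, the second of them
immediately before it and the first, if present, as in `01011`; so either one bad zero uses two
ones, or two bad zeroes use three ones.

To make the counting precise, read `w` from left to right, gaining `2` for each one and paying `3`
for each bad zero. The balance never drops below a bound in `[-4, 0]` that depends only on the next
four letters (`debtBound`, `debtBound_add_letterGain_le`, `debtBound_le_balance`). Comparing the good
zeroes of `w` with `P(w^(n))` costs at most a constant, since the patterns have length at most `5`
(`count_goodZero_le_Pcount`).
-/

open Filter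

/-- The (0-based) index `k` carries a zero of `w` followed by `0`, `100` or `1010`, i.e. the 1-based
index `k + 2` satisfies the condition defining `P(w)`. -/
def goodZero (w : ℕ → Bool) (k : ℕ) : Prop :=
  w k = false ∧ (w (k + 1) = false ∨
    (w (k + 1) = true ∧ w (k + 2) = false ∧ w (k + 3) = false) ∨
    (w (k + 1) = true ∧ w (k + 2) = false ∧ w (k + 3) = true ∧ w (k + 4) = false))

instance (w : ℕ → Bool) : DecidablePred (goodZero w) := fun k => by
  unfold goodZero; infer_instance

/-- The contribution of the letter at `k` to the balance: `2` for a one, `0` for a good zero and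
`-3` for a bad zero. -/
def letterGain (w : ℕ → Bool) (k : ℕ) : ℤ :=
  if w k = true then 2 else if goodZero w k then 0 else -3

/-- A lower bound for the balance before the letter at `k` is read, in terms of the letters to
come. Before `11` up to two bad zeroes and a single one may have been read (`-4`); before `1011` one
bad zero (`-3`); before any other one, that one may complete a run `11` (`-2`). Before `011` the debt
left by a preceding `01` may remain (`-1`), and before any other zero there is none. -/
def debtBound (w : ℕ → Bool) (k : ℕ) : ℤ :=
  if w k = false then
    if w (k + 1) = true ∧ w (k + 2) = true then -1 else 0
  else if w (k + 1) = true then -4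
  else if w (k + 2) = true ∧ w (k + 3) = true then -3 else -2

lemma debtBound_add_letterGain_le (w : ℕ → Bool) (k : ℕ) :
    debtBound w (k + 1) ≤ debtBound w k + letterGain w k := by
  simp only [debtBound, letterGain, goodZero, add_assoc, Nat.reduceAdd]
  rcases Bool.eq_false_or_eq_true (w k) with h0 | h0 <;>
  rcases Bool.eq_false_or_eq_true (w (k + 1)) with h1 | h1 <;>
  rcases Bool.eq_false_or_eq_true (w (k + 2)) with h2 | h2 <;>
  rcases Bool.eq_false_or_eq_true (w (k + 3)) with h3 | h3 <;>
  rcases Bool.eq_false_or_eq_true (w (k + 4)) with h4 | h4 <;>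
  simp [h0, h1, h2, h3, h4]

lemma debtBound_le_balance (w : ℕ → Bool) (n : ℕ) :
    debtBound w n ≤ ∑ k ∈ Finset.range n, letterGain w k := by
  induction n with
  | zero =>
    simp only [debtBound, Finset.range_zero, Finset.sum_empty]
    split_ifs <;> norm_num
  | succ n ih =>
    rw [Finset.sum_range_succ]
    linarith [debtBound_add_letterGain_le w n]

lemma prefixWord_add (w : ℕ → Bool) (m n : ℕ) :
    prefixWord w (m + n) = prefixWord w m ++ prefixWord (fun k => w (m + k)) n := by
  simp [prefixWord, List.ofFn_add]

lemma Zcount_prefixWord_succ (w : ℕ → Bool) (n : ℕ) :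
    Zcount (prefixWord w (n + 1)) = Zcount (prefixWord w n) + if w n = false then 1 else 0 := by
  rw [prefixWord_add]
  simp [Zcount, prefixWord, List.count_append, List.count_singleton]

/-- With `#bad = #zeroes - #good` and `#ones = n - #zeroes`, the balance of the first `n` letters
is `2 n + 3 · #good - 5 · #zeroes`. -/
lemma balance_eq (w : ℕ → Bool) (n : ℕ) :
    ∑ k ∈ Finset.range n, letterGain w k =
      2 * n + 3 * (Nat.count (goodZero w) n : ℤ) - 5 * (Zcount (prefixWord w n) : ℤ) := by
  induction n with
  | zero => simp [Zcount, prefixWord]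
  | succ n ih =>
    rw [Finset.sum_range_succ, ih, Nat.count_succ, Zcount_prefixWord_succ, letterGain]
    by_cases hg : goodZero w n
    · have h0 : w n = false := hg.1
      simp [hg, h0]; ring
    · rcases Bool.eq_false_or_eq_true (w n) with h0 | h0 <;> simp [hg, h0] <;> ring

/-- A good zero at `k` is witnessed within any prefix that contains five letters from `k` on. -/
lemma patternAt_of_goodZero (w : ℕ → Bool) {k m : ℕ} (hk : k < m) (h : goodZero w k) :
    patternAt (prefixWord w (m + 4)) (k + 2) := by
  obtain ⟨j, rfl⟩ : ∃ j, m = k + (j + 1) := ⟨m - k - 1, by omega⟩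
  have hd : (prefixWord w (k + (j + 1) + 4)).drop k =
      w k :: w (k + 1) :: w (k + 2) :: w (k + 3) :: w (k + 4) ::
        prefixWord (fun i => w (k + (i + 5))) j := by
    rw [show k + (j + 1) + 4 = k + (j + 5) by ring, prefixWord_add,
      List.drop_left' (by simp [prefixWord])]
    simp [prefixWord, List.ofFn_succ, add_assoc]
  refine ⟨by omega, ?_⟩
  rw [Nat.add_sub_cancel, hd]
  obtain ⟨h0, h1 | ⟨h1, h2, h3⟩ | ⟨h1, h2, h3, h4⟩⟩ := h
  · simp [h0, h1]
  · simp [h0, h1, h2, h3]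
  · simp [h0, h1, h2, h3, h4]

lemma count_goodZero_le_Pcount (w : ℕ → Bool) (m : ℕ) :
    Nat.count (goodZero w) m ≤ Pcount (prefixWord w (m + 4)) := by
  rw [Nat.count_eq_card_filter_range, Pcount]
  refine Finset.card_le_card_of_injOn (fun k => k + 2) ?_ (fun a _ b _ h => by simpa using h)
  intro k hk
  simp only [Finset.coe_filter, Finset.mem_range, Set.mem_ofPred_eq] at hk
  simp only [Pset, Finset.coe_filter, Finset.mem_range, Set.mem_ofPred_eq]
  exact ⟨by simp only [prefixWord, List.length_ofFn]; omega, patternAt_of_goodZero w hk.1 hk.2⟩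

/-- The finite form of the inequality. The constant is `4` for the largest possible debt plus
`5 · 4 - 2 · 4 = 12` for the last four letters, whose patterns need not fit. -/
lemma five_mul_Zcount_le (w : ℕ → Bool) (m : ℕ) :
    5 * Zcount (prefixWord w (m + 4)) ≤ 3 * Pcount (prefixWord w (m + 4)) + 2 * (m + 4) + 16 := by
  have hb := debtBound_le_balance w m
  rw [balance_eq] at hb
  have hd : -4 ≤ debtBound w m := by
    simp only [debtBound]
    split_ifs <;> norm_num
  have hP := count_goodZero_le_Pcount w m
  have hZ : Zcount (prefixWord w (m + 4)) ≤ Zcount (prefixWord w m) + 4 := by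
    rw [prefixWord_add]
    have h := List.count_le_length (a := false) (l := prefixWord (fun k => w (m + k)) 4)
    have hl : (prefixWord (fun k => w (m + k)) 4).length = 4 := by simp [prefixWord]
    simp only [Zcount, List.count_append]
    omega
  omega

theorem stmt_6 (w : ℕ → Bool) : (5 * rinf w - 2) / 3 ≤ Rinf w := by
  -- The prefix densities lie in a bounded range, so neither liminf is a junk value.
  have hZbdd : IsBoundedUnder (· ≥ ·) atTop
      (fun n : ℕ => (Zcount (prefixWord w n) : ℝ) / n) :=
    isBoundedUnder_of ⟨0, fun n => by positivity⟩
  have hPcobdd : IsCoboundedUnder (· ≥ ·) atTop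
      (fun n : ℕ => (Pcount (prefixWord w n) : ℝ) / n) := by
    refine (isBoundedUnder_of_eventually_le (a := 2) ?_).isCoboundedUnder_ge
    filter_upwards [eventually_ge_atTop 1] with n hn
    have h : Pcount (prefixWord w n) ≤ n + 1 := by
      simpa [Pcount, Pset, prefixWord] using
        Finset.card_filter_le (Finset.range ((prefixWord w n).length + 1))
          (patternAt (prefixWord w n))
    have hn' : (1 : ℝ) ≤ n := by exact_mod_cast hn
    have h' : (Pcount (prefixWord w n) : ℝ) ≤ n + 1 := by exact_mod_cast h
    rw [div_le_iff₀ (by linarith)]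
    linarith
  refine le_of_forall_lt fun b hb => ?_
  obtain ⟨c, hbc, hc⟩ := exists_between hb
  refine lt_of_lt_of_le hbc (le_liminf_of_le hPcobdd ?_)
  -- `a` lies strictly between `(3 c + 2) / 5` and `rinf w`; the gap absorbs the error `16 / n`.
  obtain ⟨a, hca, ha⟩ := exists_between (show (3 * c + 2) / 5 < rinf w by linarith)
  have hev := eventually_lt_of_lt_liminf ha hZbdd
  have hsmall : ∀ᶠ n : ℕ in atTop, (16 : ℝ) / n < 5 * a - 2 - 3 * c :=
    (tendsto_const_div_atTop_nhds_zero_nat 16).eventually_lt_const (by linarith)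
  filter_upwards [hev, hsmall, eventually_ge_atTop 4] with n hZ hs hn
  obtain ⟨m, rfl⟩ : ∃ m, n = m + 4 := ⟨n - 4, by omega⟩
  have hpos : (0 : ℝ) < ((m + 4 : ℕ) : ℝ) := by positivity
  have hfin : 5 * (Zcount (prefixWord w (m + 4)) : ℝ) ≤
      3 * Pcount (prefixWord w (m + 4)) + 2 * ((m + 4 : ℕ) : ℝ) + 16 := by
    exact_mod_cast five_mul_Zcount_le w m
  rw [lt_div_iff₀ hpos] at hZ
  rw [div_lt_iff₀ hpos] at hs
  rw [le_div_iff₀ hpos]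
  linarith
end

section
/- For any real number r with 2/5 ≤ r ≤ 1, there exists an infinite binary word w such that r_inf(w) = r_sup(w) = r and R_inf(w) = R_sup(w) = (5r − 2)/3. -/
/-!
Let `A = 01011` and `B = 0`. In any infinite concatenation of these two blocks the patterns `0100`
and `01010` never occur, and since both blocks begin with `0`, the pattern `00` occurs exactly once
for each `B`. A prefix consisting of `a` blocks `A` and `b` blocks `B` has length `5a + b`, contains
`2a + b` zeroes, and its occurrences of `00` number `b` up to one, so that
`5 |Z| = 2 n + 3 |P| + O(1)`. It thus suffices to
choose the blocks so that `|Z|` stays within a bounded distance of `r n`. The greedy choice does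
this: write `B` when `|Z| ≤ r n` and `A` otherwise. As `2/5 ≤ r ≤ 1`, a block `B` does not decrease
`|Z| - r n` and a block `A` does not increase it. The position inside the current block and the
zero count are the states of a small automaton (`autState`), whose invariants are `aut_balance` (greedy bound) and
`aut_relation` (the linear relation between `|Z|`, `n` and the number of blocks `B`).
-/

open Filter

/-- State `(k, z)` after `n` letters of the greedy word: `k` is the position inside a block `01011`
(`k = 0` between two blocks) and `z` is the number of zeroes written so far. The letter written from
the position `k` is `0` exactly when `k = 0` or `k = 2`. -/
noncomputable def autState (r : ℝ) : ℕ → ℕ × ℕ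
  | 0 => (0, 0)
  | n + 1 =>
    open Classical in
    let s := autState r n
    (if s.1 = 0 then (if (s.2 : ℝ) ≤ r * n then 0 else 1) else if s.1 = 4 then 0 else s.1 + 1,
     if s.1 = 0 ∨ s.1 = 2 then s.2 + 1 else s.2)

/-- The greedy word: the letters `w_{n+1}` written by the automaton `autState r`. -/
noncomputable def autWord (r : ℝ) (n : ℕ) : Bool :=
  !decide ((autState r n).1 = 0 ∨ (autState r n).1 = 2)

/-- The number of one-letter blocks `0` among the first `n` letters of the greedy word. -/
noncomputable def autB (r : ℝ) : ℕ → ℕ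
  | 0 => 0
  | n + 1 => if (autState r n).1 = 0 ∧ (autState r (n + 1)).1 = 0 then autB r n + 1 else autB r n

lemma autWord_eq_false (r : ℝ) (n : ℕ) :
    autWord r n = false ↔ (autState r n).1 = 0 ∨ (autState r n).1 = 2 := by
  simp only [autWord, Bool.not_eq_false', decide_eq_true_eq]

lemma aut_step (r : ℝ) (n : ℕ) :
    ((autState r n).1 = 0 ∧ (autState r (n + 1)).1 = 0 ∧ ((autState r n).2 : ℝ) ≤ r * n ∧
      (autState r (n + 1)).2 = (autState r n).2 + 1) ∨
    ((autState r n).1 = 0 ∧ (autState r (n + 1)).1 = 1 ∧ r * n < ((autState r n).2 : ℝ) ∧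
      (autState r (n + 1)).2 = (autState r n).2 + 1) ∨
    ((autState r n).1 = 4 ∧ (autState r (n + 1)).1 = 0 ∧
      (autState r (n + 1)).2 = (autState r n).2) ∨
    ((autState r n).1 = 2 ∧ (autState r (n + 1)).1 = 3 ∧
      (autState r (n + 1)).2 = (autState r n).2 + 1) ∨
    ((autState r n).1 ≠ 0 ∧ (autState r n).1 ≠ 2 ∧ (autState r n).1 ≠ 4 ∧
      (autState r (n + 1)).1 = (autState r n).1 + 1 ∧
      (autState r (n + 1)).2 = (autState r n).2) := by
  simp only [autState]
  split_ifs <;> grind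

lemma aut_le (r : ℝ) (n : ℕ) : (autState r n).1 ≤ 4 := by
  induction n with
  | zero => simp [autState]
  | succ n ih =>
    rcases aut_step r n with h | h | h | h | h <;> omega

/-- Greedy bound. For `k ≥ 1` the interval for `z - r n` is `[0, 1]`, where a block `01011` starts,
shifted by the `k` letters written since; for `k = 0` it is `[-3, 1]`, which contains the final
interval `[2 - 5 r, 3 - 5 r]` as `2 / 5 ≤ r ≤ 1`. -/
lemma aut_balance (r : ℝ) (hr1 : 2 / 5 ≤ r) (hr2 : r ≤ 1) (n : ℕ) :
    ((autState r n).1 = 0 → -3 ≤ (autState r n).2 - r * n ∧ (autState r n).2 - r * n ≤ 1) ∧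
    ((autState r n).1 = 1 → 1 - r ≤ (autState r n).2 - r * n ∧
      (autState r n).2 - r * n ≤ 2 - r) ∧
    ((autState r n).1 = 2 → 1 - 2 * r ≤ (autState r n).2 - r * n ∧
      (autState r n).2 - r * n ≤ 2 - 2 * r) ∧
    ((autState r n).1 = 3 → 2 - 3 * r ≤ (autState r n).2 - r * n ∧
      (autState r n).2 - r * n ≤ 3 - 3 * r) ∧
    ((autState r n).1 = 4 → 2 - 4 * r ≤ (autState r n).2 - r * n ∧
      (autState r n).2 - r * n ≤ 3 - 4 * r) := by
  induction n with
  | zero => simp [autState]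
  | succ n ih =>
    have h4 := aut_le r n
    obtain ⟨i0, i1, i2, i3, i4⟩ := ih
    have hs := aut_step r n
    generalize autState r n = s at *
    generalize autState r (n + 1) = t at *
    obtain ⟨k, z⟩ := s
    obtain ⟨l, y⟩ := t
    push_cast
    simp only at *
    interval_cases k <;> simp at hs i0 i1 i2 i3 i4
    · rcases hs with ⟨rfl, h, rfl⟩ | ⟨rfl, h, rfl⟩ <;> push_cast <;> simp <;>
        constructor <;> linarith
    all_goals
      obtain ⟨rfl, rfl⟩ := hs
      push_cast
      simp
      constructor <;> linarith

/-- Along the word, `5 z = 2 n + 3 b + e` with `b` the number of blocks `0` and `0 ≤ e ≤ 4`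
depending only on the position inside the current block. -/
lemma aut_relation (r : ℝ) (n : ℕ) :
    5 * (autState r n).2 = 2 * n + 3 * autB r n +
      (if (autState r n).1 = 1 then 3 else if (autState r n).1 = 2 then 1 else
        if (autState r n).1 = 3 then 4 else if (autState r n).1 = 4 then 2 else 0) := by
  induction n with
  | zero => simp [autState, autB]
  | succ n ih =>
    have h4 := aut_le r n
    rcases aut_step r n with h | h | h | h | h <;> rw [autB] <;> grind

lemma prefixWord_succ (w : ℕ → Bool) (n : ℕ) :
    prefixWord w (n + 1) = prefixWord w n ++ [w n] := by
  rw [prefixWord, List.ofFn_succ_last]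
  simp [prefixWord]

lemma zcount_autWord (r : ℝ) (n : ℕ) : Zcount (prefixWord (autWord r) n) = (autState r n).2 := by
  induction n with
  | zero => simp [prefixWord, Zcount, autState]
  | succ n ih =>
    unfold Zcount at *
    rw [prefixWord_succ, List.count_append, ih]
    have := autWord_eq_false r n
    rcases aut_step r n with h | h | h | h | h <;> grind

lemma getElem?_prefixWord_drop (w : ℕ → Bool) (n m j : ℕ) :
    ((prefixWord w n).drop m)[j]? = if m + j < n then some (w (m + j)) else none := by
  simp [prefixWord, List.getElem?_ofFn]

/-- In the greedy word only the pattern `00` ever occurs. -/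
lemma patternAt_autWord (r : ℝ) (n i : ℕ) :
    patternAt (prefixWord (autWord r) n) i ↔
      2 ≤ i ∧ i ≤ n ∧ autWord r (i - 2) = false ∧ autWord r (i - 1) = false := by
  unfold patternAt
  simp only [List.prefix_iff_getElem?, getElem?_prefixWord_drop]
  constructor
  · rintro ⟨hi, h | h | h⟩
    · have h0 := h 0 (by simp)
      have h1 := h 1 (by simp)
      simp at h0 h1
      grind
    · exfalso
      have h0 := h 0 (by simp)
      have h1 := h 1 (by simp)
      have h2 := h 2 (by simp)
      have h3 := h 3 (by simp)
      simp [autWord] at h0 h1 h2 h3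
      have s0 := aut_step r (i - 2)
      have s1 := aut_step r (i - 2 + 1)
      have s2 := aut_step r (i - 2 + 2)
      simp only [add_assoc, Nat.reduceAdd] at s0 s1 s2
      omega
    · exfalso
      have h0 := h 0 (by simp)
      have h1 := h 1 (by simp)
      have h2 := h 2 (by simp)
      have h3 := h 3 (by simp)
      have h4 := h 4 (by simp)
      simp [autWord] at h0 h1 h2 h3 h4
      have s0 := aut_step r (i - 2)
      have s1 := aut_step r (i - 2 + 1)
      have s2 := aut_step r (i - 2 + 2)
      have s3 := aut_step r (i - 2 + 3)
      simp only [add_assoc, Nat.reduceAdd] at s0 s1 s2 s3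
      omega
  · rintro ⟨hi, hn, h0, h1⟩
    refine ⟨hi, Or.inl ?_⟩
    intro j hj
    obtain ⟨m, rfl⟩ : ∃ m, i = m + 2 := ⟨i - 2, by omega⟩
    simp at hj h0 h1
    interval_cases j
    · simp [h0]; omega
    · simp [h1]; omega

lemma pcount_autWord (r : ℝ) (n : ℕ) : Pcount (prefixWord (autWord r) (n + 1)) = autB r n := by
  have key : ∀ n, Pcount (prefixWord (autWord r) n) = ((Finset.range (n + 1)).filter
      (fun i => 2 ≤ i ∧ autWord r (i - 2) = false ∧ autWord r (i - 1) = false)).card := by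
    intro n
    unfold Pcount Pset
    congr 1
    ext i
    simp only [Finset.mem_filter, Finset.mem_range, patternAt_autWord]
    simp only [prefixWord, List.length_ofFn]
    grind
  rw [key]
  induction n with
  | zero =>
    rw [autB, Finset.card_eq_zero, Finset.filter_eq_empty_iff]
    intro i hi
    rw [Finset.mem_range] at hi
    omega
  | succ n ih =>
    rw [Finset.range_add_one, Finset.filter_insert, autB]
    have hs := aut_step r n
    have e : (2 ≤ n + 1 + 1 ∧ autWord r (n + 1 + 1 - 2) = false ∧
        autWord r (n + 1 + 1 - 1) = false) ↔
        ((autState r n).1 = 0 ∧ (autState r (n + 1)).1 = 0) := by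
      simp only [Nat.add_sub_cancel, autWord_eq_false, show n + 1 + 1 - 2 = n by omega]
      omega
    simp only [e]
    split_ifs with h
    · rw [Finset.card_insert_of_notMem (by simp), ih]
    · exact ih

lemma tendsto_div_of_abs_le (a : ℕ → ℕ) (ρ C : ℝ) (h : ∀ n : ℕ, |(a n : ℝ) - ρ * n| ≤ C) :
    Tendsto (fun n : ℕ => (a n : ℝ) / n) atTop (nhds ρ) := by
  rw [tendsto_iff_dist_tendsto_zero]
  refine squeeze_zero' (Eventually.of_forall fun n => dist_nonneg) ?_
    (tendsto_const_div_atTop_nhds_zero_nat C)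
  filter_upwards [eventually_gt_atTop 0] with n hn
  have hn' : (0 : ℝ) < n := by exact_mod_cast hn
  rw [Real.dist_eq, show (a n : ℝ) / n - ρ = (a n - ρ * n) / n by field_simp, abs_div,
    abs_of_pos hn']
  gcongr
  exact h n

theorem stmt_8 (r : ℝ) (hr1 : 2 / 5 ≤ r) (hr2 : r ≤ 1) :
    ∃ w : ℕ → Bool, rinf w = r ∧ rsup w = r ∧
      Rinf w = (5 * r - 2) / 3 ∧ Rsup w = (5 * r - 2) / 3 := by
  have hz : ∀ n : ℕ, |((autState r n).2 : ℝ) - r * n| ≤ 3 := by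
    intro n
    have h4 := aut_le r n
    obtain ⟨i0, i1, i2, i3, i4⟩ := aut_balance r hr1 hr2 n
    rw [abs_le]
    generalize (autState r n).1 = k at *
    interval_cases k <;> simp at i0 i1 i2 i3 i4 <;> constructor <;> linarith
  have hZ : Tendsto (fun n : ℕ => (Zcount (prefixWord (autWord r) n) : ℝ) / n) atTop (nhds r) :=
    tendsto_div_of_abs_le _ r 3 fun n => by rw [zcount_autWord]; exact hz n
  have hP : Tendsto (fun n : ℕ => (Pcount (prefixWord (autWord r) n) : ℝ) / n) atTop
      (nhds ((5 * r - 2) / 3)) := by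
    refine tendsto_div_of_abs_le _ _ 10 fun n => ?_
    rcases n with _ | n
    · have : Pcount (prefixWord (autWord r) 0) = 0 := by
        rw [Pcount, Finset.card_eq_zero, Pset, Finset.filter_eq_empty_iff]
        intro i _ hi
        rw [patternAt_autWord] at hi
        omega
      simp [this]
    · rw [pcount_autWord]
      obtain ⟨e, he, h⟩ : ∃ e : ℕ, e ≤ 4 ∧ 5 * (autState r n).2 = 2 * n + 3 * autB r n + e :=
        ⟨_, by split_ifs <;> omega, aut_relation r n⟩
      have h' : 5 * ((autState r n).2 : ℝ) = 2 * n + 3 * autB r n + e := by exact_mod_cast h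
      have he' : (e : ℝ) ≤ 4 := by exact_mod_cast he
      have he0 : (0 : ℝ) ≤ e := e.cast_nonneg
      have := abs_le.1 (hz n)
      push_cast
      rw [abs_le]
      constructor <;> linarith
  exact ⟨autWord r, hZ.liminf_eq, hZ.limsup_eq, hP.liminf_eq, hP.limsup_eq⟩
end

section
/- For any real number r with 0 ≤ r ≤ 1, there exists an infinite binary word w such that r_inf(w) = r_sup(w) = r and R_inf(w) = R_sup(w) = r. -/
/-!
The word is cut at the squares. In the block of positions `k², …, k² + 2k` (counted from zero) the
first `⌊r (2k + 1)⌋` letters are `0` and the remaining ones are `1`. Rounding costs at most one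
letter per block, so the first `n` letters contain `r n + O(√n)` zeros (`abs_count_sub_le`).

Each index in `P` is preceded by a `0`, hence `|P| ≤ |Z|` for every word (`Pcount_le`). Conversely
a `0` that is followed by another `0` gives an element of `P` through the pattern `00`. The other
zeros are the last letter of the prefix or the last zero of a block, so at most `√n + 2` zeros are
lost (`count_le_Pcount`). Therefore both ratios converge to `r`.
-/

open Filter

namespace ZeroBlocks

/-- The number `⌊r (2k + 1)⌋` of zeros in the `k`-th block. -/
noncomputable def zeros (r : ℝ) (k : ℕ) : ℕ := ⌊r * (2 * k + 1)⌋₊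

/-- The word whose block `[k², (k+1)²)` starts with `zeros r k` zeros and continues with ones
(positions are counted from zero). -/
noncomputable def word (r : ℝ) (i : ℕ) : Bool :=
  !decide (i - Nat.sqrt i ^ 2 < zeros r (Nat.sqrt i))

lemma sqrt_block {k j : ℕ} (hj : j < 2 * k + 1) : Nat.sqrt (k ^ 2 + j) = k := by
  rw [pow_two]; exact Nat.sqrt_add_eq k (by omega)

lemma exists_block (n : ℕ) : ∃ j, j < 2 * Nat.sqrt n + 1 ∧ n = Nat.sqrt n ^ 2 + j := by
  have h1 := Nat.sqrt_le' n
  have h2 := Nat.sqrt_le_add n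
  rw [← pow_two] at h2
  exact ⟨n - Nat.sqrt n ^ 2, by omega, by omega⟩

lemma word_block (r : ℝ) {k j : ℕ} (hj : j < 2 * k + 1) :
    word r (k ^ 2 + j) = false ↔ j < zeros r k := by
  simp [word, sqrt_block hj]

lemma zeros_le {r : ℝ} (hr2 : r ≤ 1) (k : ℕ) : zeros r k ≤ 2 * k + 1 := by
  unfold zeros
  apply Nat.floor_le_of_le
  push_cast
  nlinarith [(Nat.cast_nonneg k : (0 : ℝ) ≤ k)]

lemma count_lt_eq (m b : ℕ) : Nat.count (fun j => j < m) b = min b m := by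
  induction b with
  | zero => simp
  | succ b ih =>
    rw [Nat.count_succ, ih]
    split_ifs <;> omega

lemma count_congr' {p q : ℕ → Prop} [DecidablePred p] [DecidablePred q] (b : ℕ)
    (h : ∀ j < b, (p j ↔ q j)) : Nat.count p b = Nat.count q b := by
  rw [Nat.count_eq_card_filter_range, Nat.count_eq_card_filter_range]
  congr 1
  apply Finset.filter_congr
  intro j hj
  exact h j (Finset.mem_range.1 hj)

lemma count_block (r : ℝ) (k b : ℕ) (hb : b ≤ 2 * k + 1) :
    Nat.count (fun i => word r i = false) (k ^ 2 + b)
      = Nat.count (fun i => word r i = false) (k ^ 2) + min b (zeros r k) := by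
  rw [Nat.count_add, ← count_lt_eq]
  congr 1
  apply count_congr'
  intro j hj
  exact word_block r (by omega)

lemma count_sq {r : ℝ} (hr1 : 0 ≤ r) (hr2 : r ≤ 1) (k : ℕ) :
    r * k ^ 2 - k ≤ (Nat.count (fun i => word r i = false) (k ^ 2) : ℝ) ∧
      (Nat.count (fun i => word r i = false) (k ^ 2) : ℝ) ≤ r * k ^ 2 := by
  induction k with
  | zero => simp
  | succ k ih =>
    rw [show (k + 1) ^ 2 = k ^ 2 + (2 * k + 1) by ring, count_block r k _ le_rfl,
      min_eq_right (zeros_le hr2 k)]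
    have h1 : (zeros r k : ℝ) ≤ r * (2 * k + 1) := Nat.floor_le (by positivity)
    have h2 : r * (2 * k + 1) < (zeros r k : ℝ) + 1 := Nat.lt_floor_add_one _
    push_cast
    constructor <;> nlinarith

lemma abs_count_sub_le {r : ℝ} (hr1 : 0 ≤ r) (hr2 : r ≤ 1) (n : ℕ) :
    |(Nat.count (fun i => word r i = false) n : ℝ) - r * n| ≤ 3 * Nat.sqrt n := by
  obtain ⟨j, hj, hn⟩ := exists_block n
  generalize Nat.sqrt n = k at hj hn
  subst hn
  obtain ⟨h1, h2⟩ := count_sq hr1 hr2 k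
  rw [count_block r k j hj.le]
  have hj' : (j : ℝ) ≤ 2 * k := by exact_mod_cast Nat.lt_succ_iff.1 hj
  have h3 : ((min j (zeros r k) : ℕ) : ℝ) ≤ j := by exact_mod_cast min_le_left _ _
  have h4 : (0 : ℝ) ≤ ((min j (zeros r k) : ℕ) : ℝ) := Nat.cast_nonneg _
  have h5 : r * j ≤ j := mul_le_of_le_one_left (Nat.cast_nonneg j) hr2
  have h6 : 0 ≤ r * j := by positivity
  rw [abs_le]
  push_cast at *
  constructor <;> nlinarith

lemma prefixWord_succ (w : ℕ → Bool) (n : ℕ) :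
    prefixWord w (n + 1) = prefixWord w n ++ [w n] := by
  simp only [prefixWord, List.ofFn_succ_last, Fin.val_castSucc, Fin.val_last]

lemma Zcount_prefixWord (w : ℕ → Bool) (n : ℕ) :
    Zcount (prefixWord w n) = Nat.count (fun i => w i = false) n := by
  induction n with
  | zero => simp [Zcount, prefixWord]
  | succ n ih =>
    rw [Nat.count_succ, ← ih, prefixWord_succ, Zcount, Zcount, List.count_append,
      List.count_singleton]
    simp

lemma length_prefixWord (w : ℕ → Bool) (n : ℕ) : (prefixWord w n).length = n := by
  simp [prefixWord]

lemma patternAt_zero {w : ℕ → Bool} {n i : ℕ} (h : patternAt (prefixWord w n) i) :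
    2 ≤ i ∧ i - 2 < n ∧ w (i - 2) = false := by
  obtain ⟨h2, h⟩ := h
  have key : (prefixWord w n)[i - 2]? = some false := by
    rcases h with ⟨t, ht⟩ | ⟨t, ht⟩ | ⟨t, ht⟩ <;>
    · have := congrArg (fun l => l[0]?) ht
      simpa [List.getElem?_drop] using this.symm
  obtain ⟨hl, he⟩ := List.getElem?_eq_some_iff.1 key
  refine ⟨h2, by rwa [length_prefixWord] at hl, ?_⟩
  simpa [prefixWord] using he

lemma patternAt_of_zero_zero {w : ℕ → Bool} {n i : ℕ} (hi : i + 1 < n) (h0 : w i = false)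
    (h1 : w (i + 1) = false) : patternAt (prefixWord w n) (i + 2) := by
  refine ⟨by omega, Or.inl ?_⟩
  have hl := length_prefixWord w n
  rw [Nat.add_sub_cancel, List.drop_eq_getElem_cons (by omega),
    List.drop_eq_getElem_cons (by omega)]
  simp [prefixWord, h0, h1]

lemma Pcount_le (w : ℕ → Bool) (n : ℕ) :
    Pcount (prefixWord w n) ≤ Nat.count (fun i => w i = false) n := by
  rw [Nat.count_eq_card_filter_range]
  apply Finset.card_le_card_of_injOn (fun i => i - 2)
  · intro i hi
    have := patternAt_zero (Finset.mem_filter.1 hi).2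
    simpa using this.2
  · intro i hi j hj hij
    have h1 := (patternAt_zero (Finset.mem_filter.1 hi).2).1
    have h2 := (patternAt_zero (Finset.mem_filter.1 hj).2).1
    simp only at hij
    omega

/-- A zero at position `i` which is not the last zero of its block is followed by a zero. -/
lemma eq_last_or_next {r : ℝ} (hr2 : r ≤ 1) {i : ℕ} (h : word r i = false) :
    i = Nat.sqrt i ^ 2 + zeros r (Nat.sqrt i) - 1 ∨ word r (i + 1) = false := by
  obtain ⟨j, hj, hn⟩ := exists_block i
  generalize Nat.sqrt i = k at hj hn
  subst hn
  rw [word_block r hj] at h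
  have := zeros_le hr2 k
  by_cases h' : j + 1 < zeros r k
  · right
    rw [add_assoc, word_block r (by omega)]
    exact h'
  · left
    omega

lemma count_le_Pcount {r : ℝ} (hr2 : r ≤ 1) (n : ℕ) :
    Nat.count (fun i => word r i = false) n
      ≤ Pcount (prefixWord (word r) n) + (Nat.sqrt n + 2) := by
  classical
  rw [Nat.count_eq_card_filter_range]
  have hsub : (Finset.range n).filter (fun i => word r i = false) ⊆
      (Pset (prefixWord (word r) n)).image (fun i => i - 2) ∪
        ((Finset.range (Nat.sqrt n + 1)).image (fun k => k ^ 2 + zeros r k - 1) ∪ {n - 1}) := by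
    intro i hi
    rw [Finset.mem_filter, Finset.mem_range] at hi
    obtain ⟨hin, hi⟩ := hi
    simp only [Finset.mem_union, Finset.mem_image, Finset.mem_range, Finset.mem_singleton]
    rcases eq_last_or_next hr2 hi with h | h
    · right; left
      exact ⟨Nat.sqrt i, Nat.lt_succ_of_le (Nat.sqrt_le_sqrt hin.le), h.symm⟩
    · by_cases hlast : i + 1 < n
      · left
        refine ⟨i + 2, ?_, by omega⟩
        simp only [Pset, Finset.mem_filter, Finset.mem_range, length_prefixWord]
        exact ⟨by omega, patternAt_of_zero_zero hlast hi h⟩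
      · right; right; omega
  refine (Finset.card_le_card hsub).trans ((Finset.card_union_le _ _).trans ?_)
  refine add_le_add Finset.card_image_le ((Finset.card_union_le _ _).trans ?_)
  have : ((Finset.range (Nat.sqrt n + 1)).image (fun k => k ^ 2 + zeros r k - 1)).card
      ≤ Nat.sqrt n + 1 := Finset.card_image_le.trans (by simp)
  simp only [Finset.card_singleton]
  omega

lemma tendsto_ratio {r : ℝ} {f : ℕ → ℕ}
    (h : ∀ n, |(f n : ℝ) - r * n| ≤ 5 * (Nat.sqrt n + 1)) :
    Tendsto (fun n : ℕ => (f n : ℝ) / n) atTop (nhds r) := by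
  rw [tendsto_iff_norm_sub_tendsto_zero]
  have hlim : Tendsto (fun n : ℕ => 10 / Real.sqrt n) atTop (nhds 0) :=
    tendsto_const_nhds.div_atTop (Real.tendsto_sqrt_atTop.comp tendsto_natCast_atTop_atTop)
  refine squeeze_zero' (Eventually.of_forall fun _ => norm_nonneg _) ?_ hlim
  filter_upwards [eventually_ge_atTop 1] with n hn
  have hn' : (1 : ℝ) ≤ n := by exact_mod_cast hn
  have hs : 1 ≤ Real.sqrt n := Real.one_le_sqrt.2 hn'
  have hsq : Real.sqrt n * Real.sqrt n = n := Real.mul_self_sqrt (by positivity)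
  have hle : (Nat.sqrt n : ℝ) ≤ Real.sqrt n := Real.nat_sqrt_le_real_sqrt
  have hpos : (0 : ℝ) < n := by linarith
  rw [Real.norm_eq_abs, show (f n : ℝ) / n - r = ((f n : ℝ) - r * n) / n by field_simp,
    abs_div, abs_of_pos hpos, div_le_div_iff₀ hpos (by linarith)]
  calc |(f n : ℝ) - r * n| * Real.sqrt n
      ≤ (10 * Real.sqrt n) * Real.sqrt n := by
        gcongr
        linarith [h n]
    _ = 10 * n := by rw [mul_assoc, hsq]

end ZeroBlocks

open ZeroBlocks in
theorem stmt_9 (r : ℝ) (hr1 : 0 ≤ r) (hr2 : r ≤ 1) :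
    ∃ w : ℕ → Bool, rinf w = r ∧ rsup w = r ∧ Rinf w = r ∧ Rsup w = r := by
  have hZ : Tendsto (fun n : ℕ => (Zcount (prefixWord (word r) n) : ℝ) / n) atTop (nhds r) := by
    apply tendsto_ratio
    intro n
    rw [Zcount_prefixWord]
    have := abs_count_sub_le hr1 hr2 n
    have : (0 : ℝ) ≤ Nat.sqrt n := Nat.cast_nonneg _
    linarith
  have hP : Tendsto (fun n : ℕ => (Pcount (prefixWord (word r) n) : ℝ) / n) atTop (nhds r) := by
    apply tendsto_ratio
    intro n
    have h1 := abs_le.1 (abs_count_sub_le hr1 hr2 n)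
    have h2 : (Pcount (prefixWord (word r) n) : ℝ)
        ≤ Nat.count (fun i => word r i = false) n := by exact_mod_cast Pcount_le (word r) n
    have h3 : (Nat.count (fun i => word r i = false) n : ℝ)
        ≤ Pcount (prefixWord (word r) n) + (Nat.sqrt n + 2) := by
      exact_mod_cast count_le_Pcount hr2 n
    have h4 : (0 : ℝ) ≤ Nat.sqrt n := Nat.cast_nonneg _
    rw [abs_le]
    constructor <;> linarith [h1.1, h1.2]
  exact ⟨word r, hZ.liminf_eq, hZ.limsup_eq, hP.liminf_eq, hP.limsup_eq⟩
end

section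
/- Let d_N denote the number of undesirable parameters n with 2 ≤ n ≤ N. Then liminf_{N→∞} d_N/N ≥ (5·r_inf(b) − 2)/3, where b = b_1 b_2 b_3 ⋯ is the infinite binary word of binary digits of the fractional part of √2 and r_inf(b) = liminf_{n→∞} |Z(b^(n))|/n. -/
/-!
Writing `x = 2 ^ (n - 1) - y`, the equation `L_n(x) = 2 ^ (n - 1)` becomes
`2 ^ (2n - 3) - 2 ^ (n - 2) < y ^ 2 ≤ 2 ^ (2n - 3)`.  The natural candidate is
`y = ⌊2 ^ (n - 2) √2⌋`, and it works as soon as the fractional part of `2 ^ (n - 2) √2` is below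
`11/32`, which is slightly less than `√2 / 4` (`undesirable_of_frac_small`).  That fractional part
has binary expansion `0.b_{n-1} b_n b_{n+1} ⋯`, so it is below `11/32 = (0.01011)_2` whenever
`00`, `0100` or `01010` occurs in `b` at position `n - 1` (`undesirable_of_goodStart`).

It remains to count such occurrences in an arbitrary binary word.  A zero which starts none of
the three patterns starts `011` or `01011`; the ones in `011` and the first one of `01011` are all
distinct, and every `01011` contains its own `011`, so there are at most `2/3` as many of these
zeros as ones, up to boundary effects.  Hence a prefix of length `N` with `Z` zeros has at least
`(5 Z - 2 N) / 3 - O(1)` occurrences.  Here this is proved by a bounded potential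
function that depends on five consecutive letters (`zeros_le_goodCount`).  Dividing by `N` and
taking the limit inferior gives the theorem.
-/

open Filter

/-- The infinite binary word `b = b_1 b_2 b_3 ⋯` of binary digits of the fractional
part of `√2`, indexed so that `bword k` is the digit `b_{k+1}`. -/
noncomputable def bword : ℕ → Bool := fun k => decide (sqrt2digit (k + 1) = 1)

/-- `d_N`: the number of undesirable parameters `n` with `2 ≤ n ≤ N`. -/
def numUndesirable (N : ℕ) : ℕ :=
  ((Finset.Icc 2 N).filter (fun n => Undesirable n)).card

/-- A word beginning with the letters `a b c d e` starts with `00`, `0100` or `01010`. -/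
def goodStart (a b c d e : Bool) : Bool := !a && (!b || (!c && (!d || !e)))

/-- The indicator, as an integer, of a Boolean. -/
def ind (p : Bool) : ℤ := if p then 1 else 0

/-- The potential used to count the zeros that start no pattern.  With `u` and `v` the indicators
of `011` and `01011` at the current position, and `u'` that of `011` at the next position, it is
`u - u' + 2 v` minus twice the number of ones among the first two letters. -/
def potential (a b c d e : Bool) : ℤ :=
  ind (!a && b && c) - ind (!b && c && d) + 2 * ind (!a && b && !c && d && e)
    - 2 * ind a - 2 * ind b

lemma potential_step : ∀ a b c d e g : Bool,
    5 * ind (!a) - 2 + potential b c d e g ≤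
      3 * ind (goodStart a b c d e) + potential a b c d e := by
  decide

lemma potential_bounds : ∀ a b c d e : Bool,
    -10 ≤ potential a b c d e ∧ potential a b c d e ≤ 10 := by
  decide

/-- The number of occurrences of `00`, `0100`, `01010` starting among the first `N` letters. -/
def goodCount (w : ℕ → Bool) (N : ℕ) : ℤ :=
  ∑ m ∈ Finset.range N, ind (goodStart (w m) (w (m + 1)) (w (m + 2)) (w (m + 3)) (w (m + 4)))

lemma Zcount_succ (w : ℕ → Bool) (N : ℕ) :
    (Zcount (prefixWord w (N + 1)) : ℤ) = Zcount (prefixWord w N) + ind (!w N) := by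
  unfold Zcount prefixWord
  rw [List.ofFn_succ_last]
  cases h : w N <;> simp [h, ind]

lemma zeros_le_goodCount (w : ℕ → Bool) (N : ℕ) :
    5 * (Zcount (prefixWord w N) : ℤ) - 2 * N ≤ 3 * goodCount w N + 20 := by
  have key : 5 * (Zcount (prefixWord w N) : ℤ) - 2 * N
      + potential (w N) (w (N + 1)) (w (N + 2)) (w (N + 3)) (w (N + 4)) ≤
      3 * goodCount w N + potential (w 0) (w 1) (w 2) (w 3) (w 4) := by
    induction N with
    | zero => simp [Zcount, prefixWord, goodCount]
    | succ N ih =>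
      have h := potential_step (w N) (w (N + 1)) (w (N + 2)) (w (N + 3)) (w (N + 4)) (w (N + 5))
      rw [Zcount_succ, goodCount, Finset.sum_range_succ, ← goodCount]
      rw [show N + 1 + 1 = N + 2 by ring, show N + 1 + 2 = N + 3 by ring,
        show N + 1 + 3 = N + 4 by ring, show N + 1 + 4 = N + 5 by ring]
      push_cast
      linarith
  have h0 := (potential_bounds (w 0) (w 1) (w 2) (w 3) (w 4)).2
  have h1 := (potential_bounds (w N) (w (N + 1)) (w (N + 2)) (w (N + 3)) (w (N + 4))).1
  linarith

lemma floor_succ (k : ℕ) :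
    ⌊(2 : ℝ) ^ (k + 1) * Real.sqrt 2⌋ =
      2 * ⌊(2 : ℝ) ^ k * Real.sqrt 2⌋ + ind (bword k) := by
  have h1 : 2 * ⌊(2 : ℝ) ^ k * Real.sqrt 2⌋ ≤ ⌊(2 : ℝ) ^ (k + 1) * Real.sqrt 2⌋ := by
    rw [Int.le_floor]
    push_cast
    have := Int.floor_le ((2 : ℝ) ^ k * Real.sqrt 2)
    rw [pow_succ]; linarith
  have h2 : ⌊(2 : ℝ) ^ (k + 1) * Real.sqrt 2⌋ < 2 * ⌊(2 : ℝ) ^ k * Real.sqrt 2⌋ + 2 := by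
    rw [Int.floor_lt]
    push_cast
    have := Int.lt_floor_add_one ((2 : ℝ) ^ k * Real.sqrt 2)
    rw [pow_succ]; linarith
  unfold ind bword sqrt2digit
  simp only [decide_eq_true_eq]
  split_ifs <;> omega

/-- The hypothesis `3 ≤ m` makes up for `11/32` being so close to `√2 / 4`. -/
lemma undesirable_of_frac_small (m : ℕ) (hm : 3 ≤ m)
    (h : (2 : ℝ) ^ m * Real.sqrt 2 < ⌊(2 : ℝ) ^ m * Real.sqrt 2⌋ + 11 / 32) :
    Undesirable (m + 2) := by
  have hA0 : 0 ≤ (2 : ℝ) ^ m * Real.sqrt 2 := by positivity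
  obtain ⟨s, hs⟩ := Int.eq_ofNat_of_zero_le (Int.floor_nonneg.2 hA0)
  have hle := Int.floor_le ((2 : ℝ) ^ m * Real.sqrt 2)
  rw [hs] at h hle
  push_cast at h hle
  have hsq : ((2 : ℝ) ^ m * Real.sqrt 2) ^ 2 = 2 * ((2 : ℝ) ^ m) ^ 2 := by
    rw [mul_pow, Real.sq_sqrt (by norm_num)]; ring
  have ht8 : 8 ≤ 2 ^ m := by
    calc 8 = 2 ^ 3 := by norm_num
      _ ≤ 2 ^ m := Nat.pow_le_pow_right (by norm_num) hm
  have ht8' : (8 : ℝ) ≤ 2 ^ m := by exact_mod_cast ht8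
  have hs0 : (0 : ℝ) ≤ s := Nat.cast_nonneg s
  have e1 : (s : ℝ) ^ 2 ≤ 2 * ((2 : ℝ) ^ m) ^ 2 := by
    rw [← hsq]; gcongr
  have e2 : 2 * ((2 : ℝ) ^ m) ^ 2 < ((s : ℝ) + 11 / 32) ^ 2 := by
    rw [← hsq]; gcongr
  have hs2 : (s : ℝ) ≤ 1.4143 * 2 ^ m := by
    apply le_of_sq_le_sq _ (by positivity)
    nlinarith
  have e3 : 2 * ((2 : ℝ) ^ m) ^ 2 < (s : ℝ) ^ 2 + 2 ^ m := by nlinarith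
  have f1 : s ^ 2 ≤ 2 * (2 ^ m) ^ 2 := by exact_mod_cast e1
  have f3 : 2 * (2 ^ m) ^ 2 < s ^ 2 + 2 ^ m := by exact_mod_cast e3
  unfold Undesirable
  have p1 : 2 ^ (m + 2) = 4 * 2 ^ m := by ring
  have p2 : 2 ^ (m + 2 - 1) = 2 * 2 ^ m := by
    rw [show m + 2 - 1 = m + 1 by omega]; ring
  have hst : s < 2 * 2 ^ m := by nlinarith
  refine ⟨2 * 2 ^ m - s, ?_, ?_⟩
  · rw [Finset.mem_Icc, p1]; omega
  · rw [Ln, p2, p1, Nat.add_sub_cancel]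
    generalize 2 ^ m = t at *
    obtain ⟨x, hx⟩ := Nat.exists_eq_add_of_lt hst
    rw [show 2 * t - s = x + 1 by omega, show 4 * t - (x + 1) = 2 * t + s by omega]
    rw [Nat.div_eq_iff (by omega)]
    have hprod : (x + 1) * (2 * t + s) + s ^ 2 = 4 * t ^ 2 := by
      have : 2 * t = s + x + 1 := hx
      calc (x + 1) * (2 * t + s) + s ^ 2 = (s + x + 1) * (2 * t) := by rw [this]; ring
        _ = 4 * t ^ 2 := by rw [← this]; ring
    constructor
    · nlinarith
    · have : (x + 1) * (2 * t + s) < 2 * t * t + t := by nlinarith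
      omega

lemma undesirable_of_goodStart (m : ℕ) (hm : 3 ≤ m)
    (h : goodStart (bword m) (bword (m + 1)) (bword (m + 2)) (bword (m + 3)) (bword (m + 4))) :
    Undesirable (m + 2) := by
  have a0 := floor_succ m
  have a1 := floor_succ (m + 1)
  have a2 := floor_succ (m + 2)
  have a3 := floor_succ (m + 3)
  have a4 := floor_succ (m + 4)
  have digits : ∀ a b c d e : Bool, goodStart a b c d e →
      16 * ind a + 8 * ind b + 4 * ind c + 2 * ind d + ind e ≤ 10 := by decide
  have hd := digits _ _ _ _ _ h
  have hF : ⌊(2 : ℝ) ^ (m + 5) * Real.sqrt 2⌋ < 32 * ⌊(2 : ℝ) ^ m * Real.sqrt 2⌋ + 11 := by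
    linarith
  rw [Int.floor_lt] at hF
  push_cast at hF
  apply undesirable_of_frac_small m hm
  rw [pow_add] at hF
  linarith

lemma numUndesirable_succ (N : ℕ) :
    numUndesirable (N + 2) = numUndesirable (N + 1) + if Undesirable (N + 2) then 1 else 0 := by
  unfold numUndesirable
  rw [show N + 2 = N + 1 + 1 by rfl,
    ← Finset.insert_Icc_right_eq_Icc_add_one (by omega : 2 ≤ N + 1 + 1), Finset.filter_insert]
  split_ifs
  · rw [Finset.card_insert_of_notMem (by simp)]
  · rfl

lemma goodCount_le (N : ℕ) : goodCount bword N ≤ numUndesirable (N + 1) + 3 := by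
  have ind_le : ∀ p : Bool, ind p ≤ 1 := by decide
  by_cases hN : N ≤ 3
  · have : goodCount bword N ≤ ∑ m ∈ Finset.range N, 1 :=
      Finset.sum_le_sum fun m _ => ind_le _
    simp at this
    omega
  · induction N with
    | zero => omega
    | succ N ih =>
      have ih' : goodCount bword N ≤ numUndesirable (N + 1) + 3 := by
        by_cases h3 : N ≤ 3
        · have : goodCount bword N ≤ ∑ m ∈ Finset.range N, 1 :=
            Finset.sum_le_sum fun m _ => ind_le _
          simp at this
          omega
        · exact ih h3
      rw [goodCount, Finset.sum_range_succ, ← goodCount, numUndesirable_succ]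
      have hg := undesirable_of_goodStart N (by omega)
      cases h : goodStart (bword N) (bword (N + 1)) (bword (N + 2)) (bword (N + 3))
        (bword (N + 4))
      · simp only [ind]
        push_cast
        split_ifs <;> simp <;> omega
      · rw [if_pos (hg h)]
        simp only [ind]
        push_cast
        simp
        omega

lemma numUndesirable_le (N : ℕ) : numUndesirable N ≤ N := by
  unfold numUndesirable
  refine (Finset.card_filter_le _ _).trans ?_
  simp

lemma zeros_le_numUndesirable (N : ℕ) :
    5 * (Zcount (prefixWord bword N) : ℝ) - 2 * N ≤ 3 * numUndesirable N + 40 := by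
  have h1 := zeros_le_goodCount bword N
  have h2 := goodCount_le N
  have h3 : numUndesirable (N + 1) ≤ numUndesirable N + 1 := by
    cases N with
    | zero => exact (numUndesirable_le 1).trans (by omega)
    | succ N => rw [numUndesirable_succ]; split_ifs <;> omega
  have : 5 * (Zcount (prefixWord bword N) : ℤ) - 2 * N ≤ 3 * numUndesirable N + 40 := by
    omega
  exact_mod_cast this

theorem stmt_10 :
    (5 * rinf bword - 2) / 3 ≤
      liminf (fun N : ℕ => (numUndesirable N : ℝ) / N) atTop := by
  refine le_of_forall_lt fun a' ha' => ?_
  obtain ⟨a, haa, ha⟩ := exists_between ha'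
  refine lt_of_lt_of_le haa ?_
  obtain ⟨δ, hδ, hc⟩ : ∃ δ : ℝ, 0 < δ ∧ (3 * (a + δ) + 2) / 5 < rinf bword :=
    ⟨((5 * rinf bword - 2) / 3 - a) / 2, by linarith, by linarith⟩
  have hev : ∀ᶠ N : ℕ in atTop,
      (3 * (a + δ) + 2) / 5 < (Zcount (prefixWord bword N) : ℝ) / N :=
    eventually_lt_of_lt_liminf hc
      (isBoundedUnder_of ⟨0, fun N => by positivity⟩)
  have hcob : IsCoboundedUnder (· ≥ ·) atTop
      (fun N : ℕ => (numUndesirable N : ℝ) / N) := by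
    apply IsBoundedUnder.isCoboundedUnder_ge
    refine isBoundedUnder_of ⟨1, fun N => ?_⟩
    exact div_le_one_of_le₀ (by exact_mod_cast numUndesirable_le N) (Nat.cast_nonneg N)
  refine le_liminf_of_le hcob ?_
  filter_upwards [hev, eventually_gt_atTop 0, eventually_ge_atTop ⌈40 / δ⌉₊] with N h1 h2 h3
  have hN : (0 : ℝ) < N := by exact_mod_cast h2
  have h4 : 40 ≤ N * δ := by
    rw [← div_le_iff₀ hδ]; exact Nat.ceil_le.1 h3
  rw [lt_div_iff₀ hN] at h1
  rw [le_div_iff₀ hN]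
  have := zeros_le_numUndesirable N
  nlinarith
end

section
/- For any finite binary word v and any integer p ≥ 1, |P(1^p · v · 0)| = |P(v · 0 · 1^p)|, where 1^p denotes a block of p ones and · denotes concatenation. -/
/-!
Every one of the patterns `00`, `0100`, `01010` begins and ends with the letter 0. Hence an occurrence
of a pattern can meet neither a block of ones at the start of a word nor one at its end: a leading 1
merely shifts the set of indices by one (`Pset_true_cons`), and a trailing 1 leaves it unchanged
(`Pset_concat_true`). Both sides of the theorem are therefore equal to `Pcount (v ++ [false])`.
-/

open Filter

theorem patternAt_le_length {w : List Bool} {i : ℕ} (h : patternAt w i) : i ≤ w.length := by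
  obtain ⟨h2, h | h | h⟩ := h <;>
  · have := h.length_le
    simp only [List.length_drop, List.length_cons, List.length_nil] at this
    omega

/-- The range bounding `Pset` is no restriction, since a pattern has to fit in the word. -/
theorem mem_Pset {w : List Bool} {i : ℕ} : i ∈ Pset w ↔ patternAt w i := by
  simp only [Pset, Finset.mem_filter, Finset.mem_range, and_iff_right_iff_imp]
  exact fun h => Nat.lt_succ_of_le (patternAt_le_length h)

theorem Pset_true_cons (w : List Bool) :
    Pset (true :: w) = (Pset w).map (addRightEmbedding 1) := by
  ext i
  simp only [Finset.mem_map, mem_Pset, addRightEmbedding_apply]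
  constructor
  · intro h
    -- No pattern starts with 1, so `i = 2` is impossible.
    rcases i with _ | _ | _ | i
    · simp [patternAt] at h
    · simp [patternAt] at h
    · simp [patternAt] at h
    · exact ⟨i + 2, by simpa [patternAt] using h, rfl⟩
  · rintro ⟨j, h, rfl⟩
    obtain ⟨k, rfl⟩ : ∃ k, j = k + 2 := ⟨j - 2, by have := h.1; omega⟩
    simpa [patternAt] using h

theorem prefix_concat_true_iff (q u : List Bool) :
    q ++ [false] <+: u ++ [true] ↔ q ++ [false] <+: u := by
  rw [List.prefix_concat_iff, or_iff_right]
  intro h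
  simpa using congrArg List.getLast? h

theorem patternAt_concat_true (w : List Bool) (i : ℕ) :
    patternAt (w ++ [true]) i ↔ patternAt w i := by
  by_cases hi : i - 2 ≤ w.length
  · have h1 := prefix_concat_true_iff [false] (w.drop (i - 2))
    have h2 := prefix_concat_true_iff [false, true, false] (w.drop (i - 2))
    have h3 := prefix_concat_true_iff [false, true, false, true] (w.drop (i - 2))
    simp only [List.cons_append, List.nil_append] at h1 h2 h3
    rw [patternAt, patternAt, List.drop_append_of_le_length hi, h1, h2, h3]
  · constructor <;> intro h
    · have := patternAt_le_length h
      simp only [List.length_append, List.length_singleton] at this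
      omega
    · have := patternAt_le_length h
      omega

theorem Pset_concat_true (w : List Bool) : Pset (w ++ [true]) = Pset w := by
  ext i
  rw [mem_Pset, mem_Pset, patternAt_concat_true]

theorem Pcount_replicate_true_append (p : ℕ) (w : List Bool) :
    Pcount (List.replicate p true ++ w) = Pcount w := by
  induction p with
  | zero => simp
  | succ p ih =>
    rw [List.replicate_succ, List.cons_append, Pcount, Pset_true_cons, Finset.card_map]
    exact ih

theorem Pcount_append_replicate_true (p : ℕ) (w : List Bool) :
    Pcount (w ++ List.replicate p true) = Pcount w := by
  induction p with
  | zero => simp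
  | succ p ih =>
    rw [List.replicate_succ', ← List.append_assoc, Pcount, Pset_concat_true]
    exact ih

theorem stmt_13 (v : List Bool) (p : ℕ) (hp : 1 ≤ p) :
    Pcount (List.replicate p true ++ v ++ [false]) =
      Pcount (v ++ [false] ++ List.replicate p true) := by
  rw [List.append_assoc, Pcount_replicate_true_append, Pcount_append_replicate_true]
end

section
/- Let p ≥ 0 be an integer, let v be a nonempty finite binary word whose first and last letters are 0 and which does not contain 111 as a contiguous subword, and let v' be any finite binary word. Then |P(1^{p+1} · v · 11 · v')| = |P(1^p · v · 111 · v')|, where 1^k denotes a block of k ones and · denotes concatenation. -/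
/-!
Each of the patterns `00`, `0100`, `01010` starts and ends with `0` and avoids the factor `11`.
Hence no occurrence can overlap a factor `11`, and `11` splits the count:
`|P(s · 11 · t)| = |P(s)| + |P(t)|` for all words `s`, `t` (`Pcount_append_true_true`).
A leading `1` starts no pattern, so it does not change the count either
(`Pcount_true_cons`). Applied with `t = v'` and `t = 1 · v'`, these facts show that both sides of
the identity are equal to `|P(v)| + |P(v')|`. Both rest on the recursion `Pcount_cons`, which
counts an occurrence at the head of the word separately from those in its tail.
-/

open Filter

/-- One of the patterns `00`, `0100`, `01010` is a prefix of `w`. -/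
def startsPattern (w : List Bool) : Prop :=
  [false, false] <+: w ∨ [false, true, false, false] <+: w ∨
    [false, true, false, true, false] <+: w

instance : DecidablePred startsPattern := fun w => by
  unfold startsPattern; infer_instance

theorem patternAt_add_two (w : List Bool) (i : ℕ) :
    patternAt w (i + 2) ↔ startsPattern (w.drop i) := by
  simp [patternAt, startsPattern]

/-- `|P(w)|` counts the positions (numbered from `0`) at which a pattern starts; the last position
is left out because a pattern has at least two letters. -/
theorem Pcount_eq_sum (w : List Bool) :
    Pcount w = ∑ i ∈ Finset.range (w.length - 1), if startsPattern (w.drop i) then 1 else 0 := by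
  have h0 : ¬ patternAt w 0 := by simp [patternAt]
  have h1 : ¬ patternAt w 1 := by simp [patternAt]
  rw [Pcount, Pset, Finset.card_filter]
  rcases hn : w.length with _ | n
  · simp [h0]
  · rw [Finset.sum_range_succ', Finset.sum_range_succ']
    simp [h0, h1, patternAt_add_two]

theorem Pcount_cons (a : Bool) (w : List Bool) :
    Pcount (a :: w) = Pcount w + if startsPattern (a :: w) then 1 else 0 := by
  rw [Pcount_eq_sum, Pcount_eq_sum]
  rcases w with _ | ⟨b, w⟩
  · simp [startsPattern]
  · have hl (x : List Bool) (c : Bool) : (c :: x).length - 1 = x.length := rfl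
    rw [hl, hl, List.length_cons, Finset.sum_range_succ']
    simp only [List.drop_succ_cons, List.drop_zero]

theorem Pcount_true_cons (w : List Bool) : Pcount (true :: w) = Pcount w := by
  simp [Pcount_cons, startsPattern]

theorem Pcount_replicate_append (n : ℕ) (w : List Bool) :
    Pcount (List.replicate n true ++ w) = Pcount w := by
  induction n with
  | zero => rfl
  | succ n ih => rw [List.replicate_succ, List.cons_append, Pcount_true_cons, ih]

/-- A pattern starting inside `s` cannot reach into a factor `11` that follows `s`. -/
theorem startsPattern_append_true_true (a : Bool) (s t : List Bool) :
    startsPattern (a :: s ++ true :: true :: t) ↔ startsPattern (a :: s) := by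
  -- A pattern has at most five letters, so four letters after `a` decide the matter.
  rcases s with _ | ⟨b, _ | ⟨c, _ | ⟨d, _ | ⟨e, s⟩⟩⟩⟩ <;> simp [startsPattern]

theorem Pcount_append_true_true (s t : List Bool) :
    Pcount (s ++ true :: true :: t) = Pcount s + Pcount t := by
  induction s with
  | nil => simp [Pcount_true_cons, Pcount_eq_sum []]
  | cons a s ih =>
    have h := startsPattern_append_true_true a s t
    rw [List.cons_append] at h ⊢
    rw [Pcount_cons, Pcount_cons, ih]
    simp only [h]
    omega

theorem stmt_14 (p : ℕ) (v v' : List Bool) (hv : v ≠ [])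
    (hfirst : v.head? = some false) (hlast : v.getLast? = some false)
    (h111 : ¬ ([true, true, true] <:+: v)) :
    Pcount (List.replicate (p + 1) true ++ v ++ [true, true] ++ v') =
      Pcount (List.replicate p true ++ v ++ [true, true, true] ++ v') := by
  simp only [List.append_assoc, Pcount_replicate_append, List.cons_append, List.nil_append,
    Pcount_append_true_true, Pcount_true_cons]
end

section
/- Let v and v' be finite binary words such that 0110110 is not a contiguous subword of the word v · 0110. Then |P(v · 1010110 · v')| ≤ |P(v · 0110110 · v')|, where · denotes concatenation. -/
/-!
The inequality holds because `P(v · 1010110 · v') ⊆ P(v · 0110110 · v')`, which is checked for each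
occurrence of a pattern according to where it starts. An occurrence starting in `v` and reaching
into `1010` survives the replacement of `1010` by `0110`, with another pattern if necessary:
`0|1010` is `01010` while `0|0` is `00`, and `010|10` is `01010` while `010|0` is `0100`.
No pattern starts at one of the first six letters of `1010110` or of `0110110`, and
from the seventh letter on the two words agree. This is `startsPattern_append` (start in `v`
or at the letter after it) and `startsPattern_drop` (start further right).
-/

open Filter

/-- One of the patterns `00`, `0100`, `01010` is a prefix of the word `s`. -/
def StartsPattern (s : List Bool) : Prop :=
  [false, false] <+: s ∨ [false, true, false, false] <+: s ∨
    [false, true, false, true, false] <+: s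

/-- A pattern at the start is not lost, `u` being what remains of `v` from there on; patterns have at
most five letters, so five or more letters of `u` decide alone. -/
lemma startsPattern_append (u v' : List Bool)
    (h : StartsPattern (u ++ ([true, false, true, false, true, true, false] ++ v'))) :
    StartsPattern (u ++ ([false, true, true, false, true, true, false] ++ v')) := by
  unfold StartsPattern at *
  rcases u with _ | ⟨a, _ | ⟨b, _ | ⟨c, _ | ⟨d, _ | ⟨e, u⟩⟩⟩⟩⟩ <;>
    simp [List.cons_prefix_cons] at h ⊢ <;> grind

lemma startsPattern_drop (m : ℕ) (hm : 1 ≤ m) (v' : List Bool)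
    (h : StartsPattern (([true, false, true, false, true, true, false] ++ v').drop m)) :
    StartsPattern (([false, true, true, false, true, true, false] ++ v').drop m) := by
  unfold StartsPattern at *
  rcases m with _ | _ | _ | _ | _ | _ | _ | m <;>
    simp [List.cons_prefix_cons] at hm h ⊢ <;> exact h

theorem stmt_19 (v v' : List Bool)
    (h : ¬ ([false, true, true, false, true, true, false] <:+:
      (v ++ [false, true, true, false]))) :
    Pcount (v ++ [true, false, true, false, true, true, false] ++ v') ≤
      Pcount (v ++ [false, true, true, false, true, true, false] ++ v') := by
  apply Finset.card_le_card
  intro i hi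
  simp only [Pset, Finset.mem_filter, Finset.mem_range] at hi ⊢
  obtain ⟨hlen, h2, hp⟩ := hi
  refine ⟨by simpa using hlen, h2, ?_⟩
  change StartsPattern _ at hp
  change StartsPattern _
  rw [List.append_assoc, List.drop_append] at hp ⊢
  rcases le_or_gt (i - 2) v.length with hk | hk
  · rw [Nat.sub_eq_zero_of_le hk, List.drop_zero] at hp ⊢
    exact startsPattern_append _ _ hp
  · rw [List.drop_eq_nil_of_le hk.le, List.nil_append] at hp ⊢
    exact startsPattern_drop _ (by omega) _ hp
end
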